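/- Let ν ∈ [α, (1+α)/2] and let x be a solution of the heavy ball equation with vanishing damping and source term g satisfying ∫₀^∞ (1+t)^ν ‖g(t)‖ dt < ∞. Then the energy function W(t) = ½‖x'(t)‖² + Φ(x(t)) − Φ* satisfies W(t) = o(1/t^{2ν}) as t → +∞, i.e. t^{2ν} W(t) → 0 as t → +∞. -/

import Mathlib

open MeasureTheory Filter Real Set RealInnerProductSpace

/-!
Let `W` be the energy, `z` a minimizer, `β = 2ν` and `s = 1 + t`. The energy identity
`W' = ⟪g, x'⟫ - γ ‖x'‖²` dissipates only kinetic energy, so one perturbs `a W`, with `a = s ^ β`,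
to `E = a W + b ⟪x', x - z⟫ + d ‖x - z‖² / 2`, with `b = K s ^ (β - 1)` and `d = γ b - b'`.
For large `t` the function `E` dominates `a W / 2`, and convexity together with `β ≤ 1 + α` gives
`E' ≤ (3 √a ‖g‖ + 2 θ) (1 + E) - b W / 2` for an integrable `θ = O(s ^ (α - 2))`. Grönwall's
inequality makes `E` bounded, and then `b W` is integrable. Hence the positive part of `(a W)'` is
integrable, so `a W` converges. Since `b W = (K / s) (a W)` is integrable while `1 / s` is not,
the limit is zero.
-/

section DifferentialInequalities

variable {f φ ψ q w : ℝ → ℝ} {T L : ℝ}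

lemma sub_le_intervalIntegral_of_deriv_le {a b : ℝ} (hab : a ≤ b)
    (hf : ∀ t ∈ Icc a b, DifferentiableAt ℝ f t) (hψ : IntegrableOn ψ (Icc a b))
    (hle : ∀ t ∈ Icc a b, deriv f t ≤ ψ t) : f b - f a ≤ ∫ t in a..b, ψ t :=
  intervalIntegral.sub_le_integral_of_hasDeriv_right_of_le hab
    (fun t ht ↦ (hf t ht).continuousAt.continuousWithinAt)
    (fun t ht ↦ (hf t (Ioo_subset_Icc_self ht)).hasDerivAt.hasDerivWithinAt) hψ
    (fun t ht ↦ hle t (Ioo_subset_Icc_self ht))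

lemma intervalIntegral_le_integral_Ici_norm (hψ : IntegrableOn ψ (Ici T)) {b : ℝ} (hb : T ≤ b) :
    ∫ t in T..b, ψ t ≤ ∫ t in Ici T, ‖ψ t‖ :=
  calc ∫ t in T..b, ψ t ≤ ∫ t in Ioc T b, ‖ψ t‖ :=
        (le_norm_self _).trans <|
          (intervalIntegral.norm_integral_le_integral_norm hb).trans_eq
            (intervalIntegral.integral_of_le hb)
    _ ≤ ∫ t in Ici T, ‖ψ t‖ :=
        setIntegral_mono_set hψ.norm (ae_of_all _ fun _ ↦ norm_nonneg _)
          (Ioc_subset_Ioi_self.trans Ioi_subset_Ici_self).eventuallyLE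

lemma bddAbove_image_Ici_of_deriv_le (hf : ∀ t ∈ Ici T, DifferentiableAt ℝ f t)
    (hψ : IntegrableOn ψ (Ici T)) (hle : ∀ t ∈ Ici T, deriv f t ≤ ψ t) : BddAbove (f '' Ici T) := by
  refine ⟨f T + ∫ t in Ici T, ‖ψ t‖, forall_mem_image.2 fun b hb ↦ ?_⟩
  have hincr := sub_le_intervalIntegral_of_deriv_le hb (fun t ht ↦ hf t ht.1)
    (hψ.mono_set Icc_subset_Ici_self) (fun t ht ↦ hle t ht.1)
  linarith [intervalIntegral_le_integral_Ici_norm hψ hb]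

lemma bddAbove_image_Ici_of_deriv_le_mul_self (hf : ∀ t ∈ Ici T, DifferentiableAt ℝ f t)
    (hpos : ∀ t ∈ Ici T, 0 < f t) (hφ : IntegrableOn φ (Ici T))
    (hle : ∀ t ∈ Ici T, deriv f t ≤ φ t * f t) : BddAbove (f '' Ici T) := by
  obtain ⟨M, hM⟩ := bddAbove_image_Ici_of_deriv_le
    (fun t ht ↦ (hf t ht).log (hpos t ht).ne') hφ
    (fun t ht ↦ by
      rw [deriv.log (hf t ht) (hpos t ht).ne']
      exact (div_le_iff₀ (hpos t ht)).2 (hle t ht))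
  exact ⟨exp M, forall_mem_image.2 fun t ht ↦
    (log_le_iff_le_exp (hpos t ht)).1 (hM (mem_image_of_mem _ ht))⟩

lemma integrableOn_Ici_of_deriv_le_sub (hf : ∀ t ∈ Ici T, DifferentiableAt ℝ f t)
    (hbdd : BddBelow (f '' Ici T)) (hψ : IntegrableOn ψ (Ici T)) (hq : ContinuousOn q (Ici T))
    (hq0 : ∀ t ∈ Ici T, 0 ≤ q t) (hle : ∀ t ∈ Ici T, deriv f t ≤ ψ t - q t) :
    IntegrableOn q (Ici T) := by
  obtain ⟨m, hm⟩ := hbdd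
  have hqIcc (b : ℝ) : IntegrableOn q (Icc T b) := (hq.mono Icc_subset_Ici_self).integrableOn_Icc
  refine (integrableOn_Ici_iff_integrableOn_Ioi).2 <|
    integrableOn_Ioi_of_intervalIntegral_norm_bounded (f T - m + ∫ t in Ici T, ‖ψ t‖) T
      (fun b ↦ (hqIcc b).mono_set Ioc_subset_Icc_self) tendsto_id ?_
  filter_upwards [eventually_ge_atTop T] with b hb
  have hψIcc : IntegrableOn ψ (Icc T b) := hψ.mono_set Icc_subset_Ici_self
  have hnorm : ∫ t in T..b, ‖q t‖ = ∫ t in T..b, q t :=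
    intervalIntegral.integral_congr fun t ht ↦ norm_of_nonneg (hq0 t (uIcc_of_le hb ▸ ht).1)
  have hincr := sub_le_intervalIntegral_of_deriv_le hb (fun t ht ↦ hf t ht.1)
    (hψIcc.sub (hqIcc b)) (fun t ht ↦ hle t ht.1)
  simp only [Pi.sub_apply] at hincr
  rw [intervalIntegral.integral_sub ((intervalIntegrable_iff_integrableOn_Icc_of_le hb).2 hψIcc)
    ((intervalIntegrable_iff_integrableOn_Icc_of_le hb).2 (hqIcc b))] at hincr
  rw [hnorm]
  linarith [intervalIntegral_le_integral_Ici_norm hψ hb, hm (mem_image_of_mem f hb)]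

lemma exists_tendsto_of_deriv_le (hf : ∀ t ∈ Ici T, DifferentiableAt ℝ f t)
    (hbdd : BddBelow (f '' Ici T)) (hψ : IntegrableOn ψ (Ici T))
    (hle : ∀ t ∈ Ici T, deriv f t ≤ ψ t) : ∃ L, Tendsto f atTop (nhds L) := by
  obtain ⟨m, hm⟩ := hbdd
  let h : ℝ → ℝ := fun t ↦ f t - ∫ s in T..t, ψ s
  have hint {t : ℝ} (ht : T ≤ t) : IntervalIntegrable ψ volume T t :=
    (intervalIntegrable_iff_integrableOn_Icc_of_le ht).2 (hψ.mono_set Icc_subset_Ici_self)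
  have hanti : Antitone fun t ↦ h (max T t) := fun a b hab ↦ by
    have hmax : max T a ≤ max T b := max_le_max_left T hab
    have hincr := sub_le_intervalIntegral_of_deriv_le hmax
      (fun t ht ↦ hf t ((le_max_left T a).trans ht.1))
      (hψ.mono_set fun t ht ↦ (le_max_left T a).trans ht.1)
      (fun t ht ↦ hle t ((le_max_left T a).trans ht.1))
    rw [← intervalIntegral.integral_interval_sub_left (hint (le_max_left T b))
      (hint (le_max_left T a))] at hincr
    simp only [h]
    linarith
  have hbelow : BddBelow (range fun t ↦ h (max T t)) := by
    refine ⟨m - ∫ t in Ici T, ‖ψ t‖, forall_mem_range.2 fun t ↦ ?_⟩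
    have hfm := hm (mem_image_of_mem f (le_max_left T t))
    have := intervalIntegral_le_integral_Ici_norm hψ (le_max_left T t)
    simp only [h]
    linarith
  have hlim := (tendsto_atTop_ciInf hanti hbelow).add <|
    intervalIntegral_tendsto_integral_Ioi T (hψ.mono_set Ioi_subset_Ici_self) tendsto_id
  refine ⟨_, hlim.congr' ?_⟩
  filter_upwards [eventually_ge_atTop T] with t ht
  simp only [h, max_eq_right ht, id, sub_add_cancel]

lemma eq_zero_of_tendsto_of_integrableAtFilter_mul {l : Filter ℝ} [l.IsMeasurablyGenerated]
    (hf : Tendsto f l (nhds L)) (hwm : StronglyMeasurableAtFilter w l)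
    (hwf : IntegrableAtFilter (fun t ↦ w t * f t) l) (hw : ¬ IntegrableAtFilter w l) : L = 0 := by
  by_contra hL
  have hinv : (fun t ↦ (f t)⁻¹) =O[l] fun _ ↦ (1 : ℝ) := (hf.inv₀ hL).isBigO_one ℝ
  have hbig : w =O[l] fun t ↦ w t * f t := by
    refine ((Asymptotics.isBigO_refl (fun t ↦ w t * f t) l).mul hinv).congr' ?_ (by simp)
    filter_upwards [hf.eventually_ne hL] with t ht using mul_inv_cancel_right₀ ht _
  exact hw (hbig.integrableAtFilter hwm hwf)

end DifferentialInequalities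

lemma sub_le_fderiv_apply_sub_of_convexOn {E : Type*} [NormedAddCommGroup E] [NormedSpace ℝ E]
    {S : Set E} {f : E → ℝ} {f' : E →L[ℝ] ℝ} {u z : E} (hf : ConvexOn ℝ S f) (hu : u ∈ S)
    (hz : z ∈ S) (hf' : HasFDerivAt f f' u) : f u - f z ≤ f' (u - z) := by
  have hconv := hf.comp_affineMap (AffineMap.lineMap (k := ℝ) u z)
  have hderiv : HasDerivAt (f ∘ AffineMap.lineMap (k := ℝ) u z) (f' (z - u)) 0 :=
    HasFDerivAt.comp_hasDerivAt 0 (by simpa using hf') AffineMap.hasDerivAt_lineMap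
  have hslope := hconv.le_slope_of_hasDerivAt (by simpa using hu) (by simpa using hz)
    zero_lt_one hderiv
  simp only [slope_def_field, Function.comp_apply, AffineMap.lineMap_apply_one,
    AffineMap.lineMap_apply_zero, sub_zero, div_one] at hslope
  rw [← neg_sub z u, map_neg]
  linarith

section HeavyBall

variable {H : Type*} [NormedAddCommGroup H] {Φ : H → ℝ} {z : H} {x x' : ℝ → H} {t : ℝ}

/-- The mechanical energy of the motion `x` with velocity `x'`, the potential `Φ` being normalized
to vanish at the reference point `z`. -/
noncomputable def heavyBallEnergy (Φ : H → ℝ) (z : H) (x x' : ℝ → H) (t : ℝ) : ℝ :=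
  ‖x' t‖ ^ 2 / 2 + Φ (x t) - Φ z

lemma norm_sq_le_two_mul_heavyBallEnergy (hmin : ∀ u, Φ z ≤ Φ u) :
    ‖x' t‖ ^ 2 ≤ 2 * heavyBallEnergy Φ z x x' t := by
  rw [heavyBallEnergy]
  linarith [hmin (x t)]

lemma heavyBallEnergy_nonneg (hmin : ∀ u, Φ z ≤ Φ u) : 0 ≤ heavyBallEnergy Φ z x x' t := by
  linarith [norm_sq_le_two_mul_heavyBallEnergy (x := x) (x' := x') (t := t) hmin,
    sq_nonneg ‖x' t‖]

variable [InnerProductSpace ℝ H]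

/-- `x`, with velocity `x'` and acceleration `x''`, solves the heavy ball equation
`x'' + γ x' + Φ'(x) = g` at every time in `S`; here `Φ'` is the gradient field of the potential. -/
structure IsHeavyBallSolutionOn (γ : ℝ → ℝ) (Φ' : H → H) (g x x' x'' : ℝ → H) (S : Set ℝ) :
    Prop where
  hasDerivAt_position : ∀ t ∈ S, HasDerivAt x (x' t) t
  hasDerivAt_velocity : ∀ t ∈ S, HasDerivAt x' (x'' t) t
  equation : ∀ t ∈ S, x'' t + γ t • x' t + Φ' (x t) = g t

/-- The weighted energy `a W` perturbed by the cross term `b ⟪x', x - z⟫` and by `d ‖x - z‖² / 2`.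
The perturbation turns the dissipation of kinetic energy into dissipation of the whole energy. -/
noncomputable def heavyBallLyapunov (a b d : ℝ → ℝ) (Φ : H → ℝ) (z : H) (x x' : ℝ → H)
    (t : ℝ) : ℝ :=
  a t * heavyBallEnergy Φ z x x' t + b t * ⟪x' t, x t - z⟫ + d t * (‖x t - z‖ ^ 2 / 2)

/-- Weights `a, b, d`, with `a' = deriv a` and `d' = deriv d`, for which `heavyBallLyapunov a b d`
is coercive and decreases up to an error controlled by the rate `θ`. The derivative of `b` is
prescribed so that `⟪x', x - z⟫` cancels in the derivative of `heavyBallLyapunov a b d`. -/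
structure IsLyapunovWeightOn (γ a a' b d d' θ : ℝ → ℝ) (S : Set ℝ) : Prop where
  hasDerivAt_a : ∀ t ∈ S, HasDerivAt a (a' t) t
  hasDerivAt_b : ∀ t ∈ S, HasDerivAt b (γ t * b t - d t) t
  hasDerivAt_d : ∀ t ∈ S, HasDerivAt d (d' t) t
  a_pos : ∀ t ∈ S, 0 < a t
  b_nonneg : ∀ t ∈ S, 0 ≤ b t
  two_mul_a'_le : ∀ t ∈ S, 2 * a' t ≤ b t
  three_mul_b_le : ∀ t ∈ S, 3 * b t ≤ 2 * (a t * γ t)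
  four_mul_b_sq_le : ∀ t ∈ S, 4 * b t ^ 2 ≤ a t * d t
  d'_le : ∀ t ∈ S, d' t ≤ θ t * d t
  θ_nonneg : ∀ t ∈ S, 0 ≤ θ t

namespace IsLyapunovWeightOn

variable {γ a a' b d d' θ : ℝ → ℝ} {S : Set ℝ}

lemma d_nonneg (hw : IsLyapunovWeightOn γ a a' b d d' θ S) (ht : t ∈ S) : 0 ≤ d t :=
  nonneg_of_mul_nonneg_right ((by positivity : 0 ≤ 4 * b t ^ 2).trans (hw.four_mul_b_sq_le t ht))
    (hw.a_pos t ht)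

lemma two_mul_b_le_sqrt_mul_sqrt (hw : IsLyapunovWeightOn γ a a' b d d' θ S) (ht : t ∈ S) :
    2 * b t ≤ √(a t) * √(d t) := by
  rw [← sqrt_mul (hw.a_pos t ht).le]
  exact le_sqrt_of_sq_le (by linarith [hw.four_mul_b_sq_le t ht])

end IsLyapunovWeightOn

variable {γ a a' b d d' θ : ℝ → ℝ} {Φ' : H → H} {g x'' : ℝ → H} {S : Set ℝ} {T : ℝ}

lemma add_le_two_mul_heavyBallLyapunov (hw : IsLyapunovWeightOn γ a a' b d d' θ S)
    (hmin : ∀ u, Φ z ≤ Φ u) (ht : t ∈ S) :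
    a t * heavyBallEnergy Φ z x x' t + d t * (‖x t - z‖ ^ 2 / 2) ≤
      2 * heavyBallLyapunov a b d Φ z x x' t := by
  have hcross : 4 * (b t * -⟪x' t, x t - z⟫) ≤ a t * ‖x' t‖ ^ 2 + d t * ‖x t - z‖ ^ 2 :=
    calc 4 * (b t * -⟪x' t, x t - z⟫) ≤ 4 * (b t * (‖x' t‖ * ‖x t - z‖)) := by
          have := hw.b_nonneg t ht
          gcongr
          exact (neg_le_abs _).trans (abs_real_inner_le_norm _ _)
      _ = 2 * (2 * b t) * (‖x' t‖ * ‖x t - z‖) := by ring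
      _ ≤ 2 * (√(a t) * √(d t)) * (‖x' t‖ * ‖x t - z‖) := by
          gcongr 2 * ?_ * _
          exact hw.two_mul_b_le_sqrt_mul_sqrt ht
      _ = 2 * (√(a t) * ‖x' t‖) * (√(d t) * ‖x t - z‖) := by ring
      _ ≤ (√(a t) * ‖x' t‖) ^ 2 + (√(d t) * ‖x t - z‖) ^ 2 := two_mul_le_add_sq _ _
      _ = a t * ‖x' t‖ ^ 2 + d t * ‖x t - z‖ ^ 2 := by
          rw [mul_pow, mul_pow, sq_sqrt (hw.a_pos t ht).le, sq_sqrt (hw.d_nonneg ht)]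
  have hkin : a t * ‖x' t‖ ^ 2 ≤ a t * (2 * heavyBallEnergy Φ z x x' t) :=
    mul_le_mul_of_nonneg_left (norm_sq_le_two_mul_heavyBallEnergy hmin) (hw.a_pos t ht).le
  rw [heavyBallLyapunov]
  linarith

lemma mul_heavyBallEnergy_le_two_mul_heavyBallLyapunov
    (hw : IsLyapunovWeightOn γ a a' b d d' θ S) (hmin : ∀ u, Φ z ≤ Φ u) (ht : t ∈ S) :
    a t * heavyBallEnergy Φ z x x' t ≤ 2 * heavyBallLyapunov a b d Φ z x x' t := by
  have := mul_nonneg (hw.d_nonneg ht) (by positivity : 0 ≤ ‖x t - z‖ ^ 2 / 2)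
  linarith [add_le_two_mul_heavyBallLyapunov (x := x) (x' := x') hw hmin ht]

lemma mul_norm_sub_sq_le_four_mul_heavyBallLyapunov
    (hw : IsLyapunovWeightOn γ a a' b d d' θ S) (hmin : ∀ u, Φ z ≤ Φ u) (ht : t ∈ S) :
    d t * ‖x t - z‖ ^ 2 ≤ 4 * heavyBallLyapunov a b d Φ z x x' t := by
  have := mul_nonneg (hw.a_pos t ht).le (heavyBallEnergy_nonneg (x := x) (x' := x') (t := t) hmin)
  linarith [add_le_two_mul_heavyBallLyapunov (x := x) (x' := x') hw hmin ht]

lemma heavyBallLyapunov_nonneg (hw : IsLyapunovWeightOn γ a a' b d d' θ S)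
    (hmin : ∀ u, Φ z ≤ Φ u) (ht : t ∈ S) : 0 ≤ heavyBallLyapunov a b d Φ z x x' t := by
  have := mul_nonneg (hw.d_nonneg ht) (sq_nonneg ‖x t - z‖)
  linarith [mul_norm_sub_sq_le_four_mul_heavyBallLyapunov (x := x) (x' := x') hw hmin ht]

lemma sqrt_mul_norm_velocity_le (hw : IsLyapunovWeightOn γ a a' b d d' θ S)
    (hmin : ∀ u, Φ z ≤ Φ u) (ht : t ∈ S) :
    √(a t) * ‖x' t‖ ≤ 1 / 2 + 2 * heavyBallLyapunov a b d Φ z x x' t := by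
  have hamgm := two_mul_le_add_sq 1 (√(a t) * ‖x' t‖)
  rw [mul_pow, sq_sqrt (hw.a_pos t ht).le] at hamgm
  have hkin : a t * ‖x' t‖ ^ 2 ≤ a t * (2 * heavyBallEnergy Φ z x x' t) :=
    mul_le_mul_of_nonneg_left (norm_sq_le_two_mul_heavyBallEnergy hmin) (hw.a_pos t ht).le
  linarith [mul_heavyBallEnergy_le_two_mul_heavyBallLyapunov (x := x) (x' := x') hw hmin ht]

lemma sqrt_mul_norm_sub_le (hw : IsLyapunovWeightOn γ a a' b d d' θ S)
    (hmin : ∀ u, Φ z ≤ Φ u) (ht : t ∈ S) :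
    √(d t) * ‖x t - z‖ ≤ 1 / 2 + 2 * heavyBallLyapunov a b d Φ z x x' t := by
  have hamgm := two_mul_le_add_sq 1 (√(d t) * ‖x t - z‖)
  rw [mul_pow, sq_sqrt (hw.d_nonneg ht)] at hamgm
  linarith [mul_norm_sub_sq_le_four_mul_heavyBallLyapunov (x := x) (x' := x') hw hmin ht]

lemma mul_inner_velocity_le (hw : IsLyapunovWeightOn γ a a' b d d' θ S)
    (hmin : ∀ u, Φ z ≤ Φ u) (ht : t ∈ S) (v : H) :
    a t * ⟪v, x' t⟫ ≤
      √(a t) * ‖v‖ * (1 / 2 + 2 * heavyBallLyapunov a b d Φ z x x' t) :=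
  calc a t * ⟪v, x' t⟫ ≤ a t * (‖v‖ * ‖x' t‖) :=
        mul_le_mul_of_nonneg_left (real_inner_le_norm _ _) (hw.a_pos t ht).le
    _ = √(a t) * √(a t) * (‖v‖ * ‖x' t‖) := by rw [mul_self_sqrt (hw.a_pos t ht).le]
    _ = √(a t) * ‖v‖ * (√(a t) * ‖x' t‖) := by ring
    _ ≤ _ := by gcongr; exact sqrt_mul_norm_velocity_le hw hmin ht

lemma mul_inner_sub_le (hw : IsLyapunovWeightOn γ a a' b d d' θ S)
    (hmin : ∀ u, Φ z ≤ Φ u) (ht : t ∈ S) (v : H) :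
    b t * ⟪v, x t - z⟫ ≤
      √(a t) * ‖v‖ * (1 / 4 + heavyBallLyapunov a b d Φ z x x' t) :=
  calc b t * ⟪v, x t - z⟫ ≤ b t * (‖v‖ * ‖x t - z‖) :=
        mul_le_mul_of_nonneg_left (real_inner_le_norm _ _) (hw.b_nonneg t ht)
    _ = 2 * b t * (‖v‖ * ‖x t - z‖) / 2 := by ring
    _ ≤ √(a t) * √(d t) * (‖v‖ * ‖x t - z‖) / 2 := by
        gcongr ?_ * _ / 2; exact hw.two_mul_b_le_sqrt_mul_sqrt ht
    _ = √(a t) * ‖v‖ * (√(d t) * ‖x t - z‖) / 2 := by ring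
    _ ≤ √(a t) * ‖v‖ * (1 / 2 + 2 * heavyBallLyapunov a b d Φ z x x' t) / 2 := by
        gcongr; exact sqrt_mul_norm_sub_le hw hmin ht
    _ = _ := by ring

namespace IsHeavyBallSolutionOn

lemma mono {S' : Set ℝ} (h : IsHeavyBallSolutionOn γ Φ' g x x' x'' S) (hS : S' ⊆ S) :
    IsHeavyBallSolutionOn γ Φ' g x x' x'' S' where
  hasDerivAt_position t ht := h.hasDerivAt_position t (hS ht)
  hasDerivAt_velocity t ht := h.hasDerivAt_velocity t (hS ht)
  equation t ht := h.equation t (hS ht)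

lemma acceleration_eq (h : IsHeavyBallSolutionOn γ Φ' g x x' x'' S) (ht : t ∈ S) :
    x'' t = g t - γ t • x' t - Φ' (x t) := by
  rw [← h.equation t ht]
  abel

lemma hasDerivAt_energy (h : IsHeavyBallSolutionOn γ Φ' g x x' x'' S)
    (hΦ : ∀ u, HasFDerivAt Φ (innerSL ℝ (Φ' u)) u) (ht : t ∈ S) :
    HasDerivAt (heavyBallEnergy Φ z x x') (⟪g t, x' t⟫ - γ t * ‖x' t‖ ^ 2) t := by
  have hkin := (h.hasDerivAt_velocity t ht).norm_sq.div_const 2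
  have hpot := (hΦ (x t)).comp_hasDerivAt t (h.hasDerivAt_position t ht)
  refine ((hkin.add hpot).sub_const (Φ z)).congr_deriv ?_
  rw [h.acceleration_eq ht, inner_sub_right, inner_sub_right, inner_smul_right,
    real_inner_self_eq_norm_sq, innerSL_apply_apply, real_inner_comm (g t),
    real_inner_comm (Φ' (x t))]
  ring

lemma hasDerivAt_inner_sub (h : IsHeavyBallSolutionOn γ Φ' g x x' x'' S) (ht : t ∈ S) :
    HasDerivAt (fun t ↦ ⟪x' t, x t - z⟫)
      (‖x' t‖ ^ 2 + ⟪g t, x t - z⟫ - γ t * ⟪x' t, x t - z⟫ - ⟪Φ' (x t), x t - z⟫) t := by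
  refine ((h.hasDerivAt_velocity t ht).inner ℝ
    ((h.hasDerivAt_position t ht).sub_const z)).congr_deriv ?_
  rw [h.acceleration_eq ht, inner_sub_left, inner_sub_left, real_inner_smul_left,
    real_inner_self_eq_norm_sq]
  ring

lemma hasDerivAt_norm_sub_sq (h : IsHeavyBallSolutionOn γ Φ' g x x' x'' S) (ht : t ∈ S) :
    HasDerivAt (fun t ↦ ‖x t - z‖ ^ 2 / 2) ⟪x' t, x t - z⟫ t := by
  refine (((h.hasDerivAt_position t ht).sub_const z).norm_sq.div_const 2).congr_deriv ?_
  rw [real_inner_comm, mul_div_cancel_left₀ _ two_ne_zero]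

lemma hasDerivAt_lyapunov (h : IsHeavyBallSolutionOn γ Φ' g x x' x'' S)
    (hw : IsLyapunovWeightOn γ a a' b d d' θ S)
    (hΦ : ∀ u, HasFDerivAt Φ (innerSL ℝ (Φ' u)) u) (ht : t ∈ S) :
    HasDerivAt (heavyBallLyapunov a b d Φ z x x')
      (a' t * heavyBallEnergy Φ z x x' t + a t * (⟪g t, x' t⟫ - γ t * ‖x' t‖ ^ 2)
        + b t * (‖x' t‖ ^ 2 + ⟪g t, x t - z⟫ - ⟪Φ' (x t), x t - z⟫)
        + d' t * (‖x t - z‖ ^ 2 / 2)) t := by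
  refine ((((hw.hasDerivAt_a t ht).mul (h.hasDerivAt_energy hΦ ht)).add
    ((hw.hasDerivAt_b t ht).mul (h.hasDerivAt_inner_sub ht))).add
    ((hw.hasDerivAt_d t ht).mul (h.hasDerivAt_norm_sub_sq ht))).congr_deriv ?_
  ring

lemma deriv_lyapunov_le (h : IsHeavyBallSolutionOn γ Φ' g x x' x'' S)
    (hw : IsLyapunovWeightOn γ a a' b d d' θ S)
    (hΦ : ∀ u, HasFDerivAt Φ (innerSL ℝ (Φ' u)) u) (hmin : ∀ u, Φ z ≤ Φ u)
    (hstar : ∀ u, Φ u - Φ z ≤ ⟪Φ' u, u - z⟫) (ht : t ∈ S) :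
    deriv (heavyBallLyapunov a b d Φ z x x') t ≤
      (3 * (√(a t) * ‖g t‖) + 2 * θ t) * (1 + heavyBallLyapunov a b d Φ z x x' t)
        - b t * heavyBallEnergy Φ z x x' t / 2 := by
  rw [(h.hasDerivAt_lyapunov hw hΦ ht).deriv]
  set W := heavyBallEnergy Φ z x x' t with hW
  set E := heavyBallLyapunov a b d Φ z x x' t
  have hvel := mul_inner_velocity_le (b := b) (x := x) (x' := x') hw hmin ht (g t)
  have hpos := mul_inner_sub_le (x := x) (x' := x') hw hmin ht (g t)
  have hweight : 2 * a' t * W ≤ b t * W :=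
    mul_le_mul_of_nonneg_right (hw.two_mul_a'_le t ht) (heavyBallEnergy_nonneg hmin)
  have hdamp : 3 * b t * ‖x' t‖ ^ 2 ≤ 2 * (a t * γ t) * ‖x' t‖ ^ 2 :=
    mul_le_mul_of_nonneg_right (hw.three_mul_b_le t ht) (sq_nonneg _)
  have hconv : b t * (W - ‖x' t‖ ^ 2 / 2) ≤ b t * ⟪Φ' (x t), x t - z⟫ := by
    refine mul_le_mul_of_nonneg_left ?_ (hw.b_nonneg t ht)
    rw [hW, heavyBallEnergy]
    linarith [hstar (x t)]
  have hdist : d' t * (‖x t - z‖ ^ 2 / 2) ≤ 2 * θ t * (1 + E) :=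
    calc d' t * (‖x t - z‖ ^ 2 / 2) ≤ θ t * d t * (‖x t - z‖ ^ 2 / 2) := by
          gcongr; exact hw.d'_le t ht
      _ = θ t * (d t * ‖x t - z‖ ^ 2) / 2 := by ring
      _ ≤ θ t * (4 * E) / 2 := by
          have := hw.θ_nonneg t ht
          gcongr _ * ?_ / 2
          exact mul_norm_sub_sq_le_four_mul_heavyBallLyapunov hw hmin ht
      _ ≤ 2 * θ t * (1 + E) := by linarith [hw.θ_nonneg t ht]
  have hsource : 0 ≤ √(a t) * ‖g t‖ := by positivity
  linarith

lemma deriv_mul_energy_le (h : IsHeavyBallSolutionOn γ Φ' g x x' x'' S)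
    (hw : IsLyapunovWeightOn γ a a' b d d' θ S)
    (hΦ : ∀ u, HasFDerivAt Φ (innerSL ℝ (Φ' u)) u) (hmin : ∀ u, Φ z ≤ Φ u)
    (ht : t ∈ S) :
    deriv (fun t ↦ a t * heavyBallEnergy Φ z x x' t) t ≤
      b t * heavyBallEnergy Φ z x x' t / 2
        + 2 * (√(a t) * ‖g t‖) * (1 + heavyBallLyapunov a b d Φ z x x' t) := by
  rw [((hw.hasDerivAt_a t ht).fun_mul (h.hasDerivAt_energy hΦ ht)).deriv]
  have hvel := mul_inner_velocity_le (b := b) (x := x) (x' := x') hw hmin ht (g t)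
  have hweight : 2 * a' t * heavyBallEnergy Φ z x x' t ≤ b t * heavyBallEnergy Φ z x x' t :=
    mul_le_mul_of_nonneg_right (hw.two_mul_a'_le t ht) (heavyBallEnergy_nonneg hmin)
  have hdamp : 0 ≤ a t * γ t * ‖x' t‖ ^ 2 :=
    mul_nonneg (by linarith [hw.three_mul_b_le t ht, hw.b_nonneg t ht]) (sq_nonneg _)
  have hsource : 0 ≤ √(a t) * ‖g t‖ := by positivity
  linarith

lemma exists_one_add_lyapunov_le (h : IsHeavyBallSolutionOn γ Φ' g x x' x'' (Ici T))
    (hw : IsLyapunovWeightOn γ a a' b d d' θ (Ici T))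
    (hΦ : ∀ u, HasFDerivAt Φ (innerSL ℝ (Φ' u)) u) (hmin : ∀ u, Φ z ≤ Φ u)
    (hstar : ∀ u, Φ u - Φ z ≤ ⟪Φ' u, u - z⟫) (hθ : IntegrableOn θ (Ici T))
    (hg : IntegrableOn (fun t ↦ √(a t) * ‖g t‖) (Ici T)) :
    ∃ M, ∀ t ∈ Ici T, 1 + heavyBallLyapunov a b d Φ z x x' t ≤ M := by
  obtain ⟨M, hM⟩ := bddAbove_image_Ici_of_deriv_le_mul_self
    (f := fun t ↦ 1 + heavyBallLyapunov a b d Φ z x x' t)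
    (fun t ht ↦ (h.hasDerivAt_lyapunov hw hΦ ht).differentiableAt.const_add 1)
    (fun t ht ↦ by linarith [heavyBallLyapunov_nonneg (x := x) (x' := x') hw hmin ht])
    ((hg.const_mul 3).add (hθ.const_mul 2))
    (fun t ht ↦ (deriv_const_add 1).trans_le <|
      (h.deriv_lyapunov_le hw hΦ hmin hstar ht).trans <| sub_le_self _ <|
      div_nonneg (mul_nonneg (hw.b_nonneg t ht) (heavyBallEnergy_nonneg hmin)) two_pos.le)
  exact ⟨M, fun t ht ↦ hM (mem_image_of_mem _ ht)⟩

lemma continuousOn_mul_energy (h : IsHeavyBallSolutionOn γ Φ' g x x' x'' S)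
    (hw : IsLyapunovWeightOn γ a a' b d d' θ S)
    (hΦ : ∀ u, HasFDerivAt Φ (innerSL ℝ (Φ' u)) u) :
    ContinuousOn (fun t ↦ b t * heavyBallEnergy Φ z x x' t) S := fun t ht ↦
  ((hw.hasDerivAt_b t ht).mul (h.hasDerivAt_energy hΦ ht)).continuousAt.continuousWithinAt

lemma integrableOn_mul_energy {M : ℝ} (h : IsHeavyBallSolutionOn γ Φ' g x x' x'' (Ici T))
    (hw : IsLyapunovWeightOn γ a a' b d d' θ (Ici T))
    (hΦ : ∀ u, HasFDerivAt Φ (innerSL ℝ (Φ' u)) u) (hmin : ∀ u, Φ z ≤ Φ u)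
    (hstar : ∀ u, Φ u - Φ z ≤ ⟪Φ' u, u - z⟫) (hθ : IntegrableOn θ (Ici T))
    (hg : IntegrableOn (fun t ↦ √(a t) * ‖g t‖) (Ici T))
    (hM : ∀ t ∈ Ici T, 1 + heavyBallLyapunov a b d Φ z x x' t ≤ M) :
    IntegrableOn (fun t ↦ b t * heavyBallEnergy Φ z x x' t) (Ici T) := by
  have hhalf : IntegrableOn (fun t ↦ b t * heavyBallEnergy Φ z x x' t / 2) (Ici T) := by
    refine integrableOn_Ici_of_deriv_le_sub
      (fun t ht ↦ (h.hasDerivAt_lyapunov (z := z) hw hΦ ht).differentiableAt)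
      ⟨0, forall_mem_image.2 fun t ht ↦ heavyBallLyapunov_nonneg hw hmin ht⟩
      (((hg.const_mul 3).add (hθ.const_mul 2)).mul_const M)
      ((h.continuousOn_mul_energy hw hΦ).div_const 2)
      (fun t ht ↦ div_nonneg (mul_nonneg (hw.b_nonneg t ht) (heavyBallEnergy_nonneg hmin))
        two_pos.le)
      (fun t ht ↦ (h.deriv_lyapunov_le hw hΦ hmin hstar ht).trans (sub_le_sub_right ?_ _))
    have := hw.θ_nonneg t ht
    exact mul_le_mul_of_nonneg_left (hM t ht) (by positivity)
  simpa only [IntegrableOn, mul_div_cancel₀ _ (two_ne_zero' ℝ)] using hhalf.const_mul 2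

theorem tendsto_weight_mul_energy (h : IsHeavyBallSolutionOn γ Φ' g x x' x'' (Ici T))
    (hw : IsLyapunovWeightOn γ a a' b d d' θ (Ici T))
    (hΦ : ∀ u, HasFDerivAt Φ (innerSL ℝ (Φ' u)) u) (hmin : ∀ u, Φ z ≤ Φ u)
    (hstar : ∀ u, Φ u - Φ z ≤ ⟪Φ' u, u - z⟫) (hθ : IntegrableOn θ (Ici T))
    (hg : IntegrableOn (fun t ↦ √(a t) * ‖g t‖) (Ici T))
    (hba : ¬ IntegrableAtFilter (fun t ↦ b t / a t) atTop) :
    Tendsto (fun t ↦ a t * heavyBallEnergy Φ z x x' t) atTop (nhds 0) := by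
  obtain ⟨M, hM⟩ := h.exists_one_add_lyapunov_le hw hΦ hmin hstar hθ hg
  have hbW := h.integrableOn_mul_energy hw hΦ hmin hstar hθ hg hM
  obtain ⟨L, hL⟩ : ∃ L, Tendsto (fun t ↦ a t * heavyBallEnergy Φ z x x' t) atTop (nhds L) := by
    refine exists_tendsto_of_deriv_le
      (fun t ht ↦ ((hw.hasDerivAt_a t ht).fun_mul (h.hasDerivAt_energy hΦ ht)).differentiableAt)
      ⟨0, forall_mem_image.2 fun t ht ↦
        mul_nonneg (hw.a_pos t ht).le (heavyBallEnergy_nonneg hmin)⟩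
      ((hbW.div_const 2).add ((hg.const_mul 2).mul_const M))
      (fun t ht ↦ (h.deriv_mul_energy_le hw hΦ hmin ht).trans ?_)
    exact add_le_add_right (mul_le_mul_of_nonneg_left (hM t ht) (by positivity)) _
  have hratio : ContinuousOn (fun t ↦ b t / a t) (Ici T) := fun t ht ↦
    ((hw.hasDerivAt_b t ht).continuousAt.div (hw.hasDerivAt_a t ht).continuousAt
      (hw.a_pos t ht).ne').continuousWithinAt
  have hzero : L = 0 := eq_zero_of_tendsto_of_integrableAtFilter_mul hL
    ⟨Ici T, Ici_mem_atTop T, hratio.aestronglyMeasurable measurableSet_Ici⟩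
    ⟨Ici T, Ici_mem_atTop T, hbW.congr_fun (fun t ht ↦ ?_) measurableSet_Ici⟩ hba
  · exact hzero ▸ hL
  · have := (hw.a_pos t ht).ne'
    field_simp

end IsHeavyBallSolutionOn

end HeavyBall

section PowerWeights

variable {c α β K : ℝ}

lemma hasDerivAt_one_add_rpow {t : ℝ} (ht : 0 < 1 + t) (r : ℝ) :
    HasDerivAt (fun t : ℝ ↦ (1 + t) ^ r) (r * (1 + t) ^ (r - 1)) t := by
  simpa using ((hasDerivAt_id t).const_add 1).rpow_const (p := r) (Or.inl ht.ne')

/-- The weight `γ b - b'` of `‖x - z‖² / 2` in the Lyapunov function for `γ = c s ^ (-α)` and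
`b = K s ^ (β - 1)`, where `s = 1 + t`. -/
noncomputable def rpowPositionWeight (c α β K s : ℝ) : ℝ :=
  K * (c * s ^ (β - 1 - α) - (β - 1) * s ^ (β - 2))

lemma rpowPositionWeight_eq {s : ℝ} (hs : 0 < s) :
    rpowPositionWeight c α β K s = K * s ^ (β - 2) * (c * s ^ (1 - α) - (β - 1)) := by
  have hsplit : s ^ (β - 1 - α) = s ^ (β - 2) * s ^ (1 - α) := by
    rw [← rpow_add hs]; ring_nf
  rw [rpowPositionWeight, hsplit]
  ring

lemma hasDerivAt_rpowPositionWeight_one_add {t : ℝ} (ht : 0 < 1 + t) :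
    HasDerivAt (fun t ↦ rpowPositionWeight c α β K (1 + t))
      (K * (c * ((β - 1 - α) * (1 + t) ^ (β - 1 - α - 1))
        - (β - 1) * ((β - 2) * (1 + t) ^ (β - 2 - 1)))) t :=
  (((hasDerivAt_one_add_rpow ht _).const_mul c).sub
    ((hasDerivAt_one_add_rpow ht _).const_mul (β - 1))).const_mul K

lemma four_mul_sq_le_rpow_mul_rpowPositionWeight {s : ℝ} (hs : 0 < s) (hK : 0 ≤ K)
    (hlarge : 4 * K + (β - 1) ≤ c * s ^ (1 - α)) :
    4 * (K * s ^ (β - 1)) ^ 2 ≤ s ^ β * rpowPositionWeight c α β K s := by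
  have hsq : (s ^ (β - 1)) ^ 2 = s ^ β * s ^ (β - 2) := by
    rw [← rpow_natCast, ← rpow_mul hs.le, ← rpow_add hs]; ring_nf
  calc 4 * (K * s ^ (β - 1)) ^ 2 = K * (s ^ β * s ^ (β - 2)) * (4 * K) := by
        rw [mul_pow, hsq]; ring
    _ ≤ K * (s ^ β * s ^ (β - 2)) * (c * s ^ (1 - α) - (β - 1)) := by
        gcongr; linarith
    _ = _ := by rw [rpowPositionWeight_eq hs]; ring

lemma deriv_rpowPositionWeight_le {s : ℝ} (hs : 0 < s) (hc : 0 < c) (hβ : β ≤ 1 + α) (hK : 0 ≤ K)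
    (hlarge : 2 * (β - 1) ≤ c * s ^ (1 - α)) :
    K * (c * ((β - 1 - α) * s ^ (β - 1 - α - 1)) - (β - 1) * ((β - 2) * s ^ (β - 2 - 1))) ≤
      2 * |(β - 1) * (β - 2)| / c * s ^ (α - 2) * rpowPositionWeight c α β K s := by
  set Q := |(β - 1) * (β - 2)|
  have hdrop : (β - 1 - α) * s ^ (β - 1 - α - 1) ≤ 0 :=
    mul_nonpos_of_nonpos_of_nonneg (by linarith) (by positivity)
  have hshift : s ^ (β - 2 - 1) = s ^ (α - 2) * s ^ (β - 2) * s ^ (1 - α) := by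
    rw [← rpow_add hs, ← rpow_add hs]; ring_nf
  calc K * (c * ((β - 1 - α) * s ^ (β - 1 - α - 1)) - (β - 1) * ((β - 2) * s ^ (β - 2 - 1)))
      = K * (c * ((β - 1 - α) * s ^ (β - 1 - α - 1)) + -((β - 1) * (β - 2)) * s ^ (β - 2 - 1)) := by
        ring
    _ ≤ K * (c * 0 + Q * s ^ (β - 2 - 1)) := by
        gcongr; exact neg_le_abs _
    _ = 2 * Q / c * s ^ (α - 2) * (K * s ^ (β - 2) * (c * s ^ (1 - α) / 2)) := by
        rw [hshift]; field_simp; ring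
    _ ≤ 2 * Q / c * s ^ (α - 2) * (K * s ^ (β - 2) * (c * s ^ (1 - α) - (β - 1))) := by
        gcongr; linarith
    _ = _ := by rw [rpowPositionWeight_eq hs]

lemma eventually_le_mul_one_add_rpow (hc : 0 < c) (hα : α < 1) (m : ℝ) :
    ∀ᶠ t : ℝ in atTop, m ≤ c * (1 + t) ^ (1 - α) :=
  (((tendsto_rpow_atTop (sub_pos.2 hα)).comp
    (tendsto_atTop_add_const_left atTop 1 tendsto_id)).const_mul_atTop hc).eventually_ge_atTop m

lemma exists_isLyapunovWeightOn_rpow (hc : 0 < c) (hα : α < 1) (hβ : β ≤ 1 + α) (hK : 0 ≤ K)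
    (hβK : 2 * β ≤ K) :
    ∃ T, 0 ≤ T ∧ IsLyapunovWeightOn (fun t ↦ c / (1 + t) ^ α)
      (fun t ↦ (1 + t) ^ β) (fun t ↦ β * (1 + t) ^ (β - 1)) (fun t ↦ K * (1 + t) ^ (β - 1))
      (fun t ↦ rpowPositionWeight c α β K (1 + t))
      (fun t ↦ K * (c * ((β - 1 - α) * (1 + t) ^ (β - 1 - α - 1))
        - (β - 1) * ((β - 2) * (1 + t) ^ (β - 2 - 1))))
      (fun t ↦ 2 * |(β - 1) * (β - 2)| / c * (1 + t) ^ (α - 2)) (Ici T) := by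
  obtain ⟨T, hT⟩ := eventually_atTop.1 <| (eventually_ge_atTop 0).and <|
    (eventually_le_mul_one_add_rpow hc hα (4 * K + (β - 1))).and <|
    (eventually_le_mul_one_add_rpow hc hα (2 * (β - 1))).and <|
    eventually_le_mul_one_add_rpow hc hα (3 * K / 2)
  refine ⟨T, (hT T le_rfl).1, ?_⟩
  constructor <;> intro t ht <;> have hs : 0 < 1 + t := by linarith [(hT t ht).1]
  case hasDerivAt_a => exact hasDerivAt_one_add_rpow hs β
  case hasDerivAt_b =>
    refine ((hasDerivAt_one_add_rpow hs (β - 1)).const_mul K).congr_deriv ?_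
    rw [rpowPositionWeight, rpow_sub hs (β - 1) α, show β - 1 - 1 = β - 2 by ring]
    ring
  case hasDerivAt_d => exact hasDerivAt_rpowPositionWeight_one_add hs
  case a_pos => positivity
  case b_nonneg => positivity
  case two_mul_a'_le =>
    rw [← mul_assoc]
    gcongr
  case three_mul_b_le =>
    have hγ : (1 + t) ^ β * (c / (1 + t) ^ α) = c * (1 + t) ^ (1 - α) * (1 + t) ^ (β - 1) := by
      rw [mul_div_left_comm, ← rpow_sub hs, mul_assoc, ← rpow_add hs]
      ring_nf
    calc 3 * (K * (1 + t) ^ (β - 1)) = 2 * (3 * K / 2 * (1 + t) ^ (β - 1)) := by ring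
      _ ≤ 2 * (c * (1 + t) ^ (1 - α) * (1 + t) ^ (β - 1)) := by gcongr; exact (hT t ht).2.2.2
      _ = _ := by rw [hγ]
  case four_mul_b_sq_le => exact four_mul_sq_le_rpow_mul_rpowPositionWeight hs hK (hT t ht).2.1
  case d'_le => exact deriv_rpowPositionWeight_le hs hc hβ hK (hT t ht).2.2.1
  case θ_nonneg => positivity

lemma integrableOn_one_add_rpow_Ici {r T : ℝ} (hr : r < -1) (hT : -1 < T) :
    IntegrableOn (fun t : ℝ ↦ (1 + t) ^ r) (Ici T) := by
  simp only [add_comm (1 : ℝ)]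
  exact (integrableOn_Ici_iff_integrableOn_Ioi).2
    (integrableOn_add_rpow_Ioi_of_lt hr (by linarith))

lemma not_integrableAtFilter_mul_rpow_div_rpow (hK : K ≠ 0) :
    ¬ IntegrableAtFilter (fun t : ℝ ↦ K * (1 + t) ^ (β - 1) / (1 + t) ^ β) atTop := by
  intro hint
  have hbig : (fun t : ℝ ↦ t⁻¹) =O[atTop] fun t ↦ K * (1 + t) ^ (β - 1) / (1 + t) ^ β := by
    refine Asymptotics.IsBigO.of_bound (2 / |K|) ?_
    filter_upwards [eventually_ge_atTop 1] with t ht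
    have hs : 0 < 1 + t := by linarith
    rw [rpow_sub_one hs.ne', norm_div, norm_mul, norm_div, norm_inv, norm_of_nonneg hs.le,
      norm_of_nonneg (by linarith : 0 ≤ t), norm_of_nonneg (by positivity : 0 ≤ (1 + t) ^ β),
      norm_eq_abs]
    field_simp
    linarith
  obtain ⟨a, ha⟩ := integrableAtFilter_atTop_iff.1 <| hbig.integrableAtFilter
    (by fun_prop : Measurable fun t : ℝ ↦ t⁻¹).stronglyMeasurable.stronglyMeasurableAtFilter hint
  exact not_integrableOn_Ioi_inv (ha.mono_set Ioi_subset_Ici_self)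

lemma tendsto_div_one_add_rpow (r : ℝ) :
    Tendsto (fun t : ℝ ↦ (t / (1 + t)) ^ r) atTop (nhds 1) := by
  have hratio : Tendsto (fun t : ℝ ↦ t / (1 + t)) atTop (nhds 1) := by
    have hinv : Tendsto (fun t : ℝ ↦ 1 - (1 + t)⁻¹) atTop (nhds (1 - 0)) :=
      (tendsto_atTop_add_const_left atTop 1 tendsto_id).inv_tendsto_atTop.const_sub 1
    rw [sub_zero] at hinv
    refine hinv.congr' ?_
    filter_upwards [eventually_ge_atTop 0] with t ht
    have : 1 + t ≠ 0 := by linarith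
    field_simp
    ring
  simpa using hratio.rpow_const (p := r) (Or.inl one_ne_zero)

end PowerWeights

theorem heavy_ball_energy_little_o_general
    {H : Type*} [NormedAddCommGroup H] [InnerProductSpace ℝ H]
    {c α ν : ℝ} (hc : 0 < c) (hα : α < 1) (hν : ν ≤ (1 + α) / 2)
    {Φ : H → ℝ} {Φ' : H → H} {z : H}
    (hΦ : ∀ u, HasFDerivAt Φ (innerSL ℝ (Φ' u)) u) (hmin : ∀ u, Φ z ≤ Φ u)
    (hstar : ∀ u, Φ u - Φ z ≤ ⟪Φ' u, u - z⟫) {g x x' x'' : ℝ → H}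
    (h : IsHeavyBallSolutionOn (fun t ↦ c / (1 + t) ^ α) Φ' g x x' x'' (Ici 0))
    (hg : IntegrableOn (fun t ↦ (1 + t) ^ ν * ‖g t‖) (Ici 0)) :
    Tendsto (fun t ↦ t ^ (2 * ν) * heavyBallEnergy Φ z x x' t) atTop (nhds 0) := by
  have hK : 0 < 2 * |2 * ν| + 1 := by positivity
  obtain ⟨T, hT, hw⟩ := exists_isLyapunovWeightOn_rpow (β := 2 * ν) hc hα (by linarith) hK.le
    (by linarith [le_abs_self (2 * ν)])
  have hsqrt : EqOn (fun t ↦ (1 + t) ^ ν * ‖g t‖) (fun t ↦ √((1 + t) ^ (2 * ν)) * ‖g t‖)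
      (Ici T) := fun t ht ↦ by
    have hs : 0 ≤ 1 + t := by linarith [mem_Ici.1 ht]
    simp only [mul_comm 2 ν, rpow_mul hs, rpow_two, sqrt_sq (rpow_nonneg hs ν)]
  have hlim := (h.mono (Ici_subset_Ici.2 hT)).tendsto_weight_mul_energy hw hΦ hmin hstar
    ((integrableOn_one_add_rpow_Ici (by linarith) (by linarith)).const_mul _)
    ((hg.mono_set (Ici_subset_Ici.2 hT)).congr_fun hsqrt measurableSet_Ici)
    (not_integrableAtFilter_mul_rpow_div_rpow hK.ne')
  have hprod := (tendsto_div_one_add_rpow (2 * ν)).mul hlim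
  rw [mul_zero] at hprod
  refine hprod.congr' ?_
  filter_upwards [eventually_ge_atTop 0] with t ht
  have hs : 0 < 1 + t := by linarith
  rw [div_rpow ht hs.le, ← mul_assoc, div_mul_cancel₀ _ (rpow_pos_of_pos hs _).ne']

theorem heavy_ball_energy_little_o
    {H : Type*} [NormedAddCommGroup H] [InnerProductSpace ℝ H] [CompleteSpace H]
    (c α : ℝ) (hc : 0 < c) (hα0 : 0 ≤ α) (hα1 : α < 1)
    (Φ : H → ℝ) (Φ' : H → H) (Φstar : ℝ)
    (hΦconv : ConvexOn ℝ Set.univ Φ)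
    (hΦdiff : ∀ u : H, HasGradientAt Φ (Φ' u) u)
    (hΦcont : Continuous Φ')
    (hargmin : {v : H | ∀ u, Φ v ≤ Φ u}.Nonempty)
    (hΦstar : ∀ v ∈ {v : H | ∀ u, Φ v ≤ Φ u}, Φ v = Φstar)
    (g : ℝ → H) (hg : IntegrableOn g (Ici (0:ℝ)))
    (x x' x'' : ℝ → H)
    (hx1 : ∀ t ∈ Ici (0:ℝ), HasDerivAt x (x' t) t)
    (hx2 : ∀ t ∈ Ici (0:ℝ), HasDerivAt x' (x'' t) t)
    (hode : ∀ t ∈ Ici (0:ℝ),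
      x'' t + (c / (1 + t) ^ α) • x' t + Φ' (x t) = g t)
    (ν : ℝ) (hν1 : α ≤ ν) (hν2 : ν ≤ (1 + α) / 2)
    (hgν : IntegrableOn (fun t => (1 + t) ^ ν * ‖g t‖) (Ici (0:ℝ))) :
    Tendsto (fun t => t ^ (2 * ν) * (‖x' t‖ ^ 2 / 2 + Φ (x t) - Φstar))
      atTop (nhds 0) := by
  obtain ⟨z, hz⟩ := hargmin
  exact hΦstar z hz ▸ heavy_ball_energy_little_o_general hc hα1 hν2 hΦdiff hz
    (fun u ↦ sub_le_fderiv_apply_sub_of_convexOn hΦconv (mem_univ u) (mem_univ z) (hΦdiff u))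
    ⟨hx1, hx2, hode⟩ hgν
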